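/- arXiv:1601.05595 — 2 statements merged into one kernel-verified Lean document; each statement's English description precedes it below -/
import Mathlib

section
/- (Cadambe–Mazumdar bound) Let C be a q-ary (n,k,r) LRC with all symbol locality, where k ≥ 1 and r ≥ 1, and let d be its minimum distance. Then for every integer t with 1 ≤ t ≤ ⌈k/r⌉ − 1, k ≤ tr + k_opt^{(q)}(n − t(r+1), d), where k_opt^{(q)}(n', d') denotes the maximum possible dimension of a q-ary linear code of length n' with minimum distance at least d'. -/
/-- Coordinate `i` of the linear code `C` has locality `r`. -/
def HasLocality {F ι : Type*} [Field F] [Fintype ι]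
    (C : Submodule F (ι → F)) (i : ι) (r : ℕ) : Prop :=
  ∃ R : Finset ι, i ∉ R ∧ R.card ≤ r ∧
    ∀ c ∈ C, ∀ c' ∈ C, (∀ j ∈ R, c j = c' j) → c i = c' i

/-- The minimum distance of a linear code: the least Hamming weight of a nonzero codeword. -/
noncomputable def minDist {F ι : Type*} [Field F] [Fintype ι] [DecidableEq F]
    (C : Submodule F (ι → F)) : ℕ :=
  sInf {w | ∃ c ∈ C, c ≠ 0 ∧ hammingNorm c = w}

/-- `kOpt F n d` is the largest possible dimension of a linear code over `F` of length `n`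
whose minimum distance is at least `d` (every nonzero codeword has weight at least `d`). -/
noncomputable def kOpt (F : Type*) [Field F] [Fintype F] [DecidableEq F] (n d : ℕ) : ℕ :=
  sSup {k | ∃ C : Submodule F (Fin n → F), Module.finrank F C = k ∧
    ∀ c ∈ C, c ≠ 0 → d ≤ hammingNorm c}

/-!
Forcing the symbols at `m` further coordinates to vanish lowers the dimension of a code by at most
`m`. If one of them has its repair set among the vanishing coordinates, it vanishes for free
and the loss is at most `m - 1`. Blocks of `r + 1` coordinates chosen this way
cost at most `r` dimensions each, so after `t` blocks there remains a subcode of dimension at least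
`k - t r` that lives on `n - t (r + 1)` coordinates and still has minimum distance at least `d`.
-/

open Module (finrank)

section Shortening

variable {F ι : Type*} [Field F]

/-- The subcode of the codewords of `C` that vanish on `I`. Deleting the zero coordinates in `I`
from it gives the shortening of `C` at `I`; they are kept here so that all subcodes of `C` live in
the same ambient space. -/
def vanishingSubcode (C : Submodule F (ι → F)) (I : Finset ι) : Submodule F (ι → F) :=
  C ⊓ Submodule.pi I fun _ ↦ ⊥

variable {C : Submodule F (ι → F)} {c : ι → F} {I : Finset ι}

theorem mem_vanishingSubcode : c ∈ vanishingSubcode C I ↔ c ∈ C ∧ ∀ i ∈ I, c i = 0 := by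
  simp [vanishingSubcode, Submodule.mem_pi]

theorem vanishingSubcode_empty (C : Submodule F (ι → F)) : vanishingSubcode C ∅ = C := by
  ext c
  simp [mem_vanishingSubcode]

theorem finrank_vanishingSubcode_le_add_card_sdiff [Finite ι] [DecidableEq ι]
    (C : Submodule F (ι → F)) (I J : Finset ι) :
    finrank F (vanishingSubcode C I) ≤ finrank F (vanishingSubcode C J) + (J \ I).card := by
  let restrict : vanishingSubcode C I →ₗ[F] (↥(J \ I) → F) :=
    LinearMap.funLeft F F Subtype.val ∘ₗ (vanishingSubcode C I).subtype
  have hker : finrank F (LinearMap.ker restrict) ≤ finrank F (vanishingSubcode C J) := by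
    rw [← Submodule.finrank_map_subtype_eq]
    refine Submodule.finrank_mono ?_
    rintro _ ⟨⟨c, hc⟩, hrestrict, rfl⟩
    obtain ⟨hcC, hcI⟩ := mem_vanishingSubcode.1 hc
    refine mem_vanishingSubcode.2 ⟨hcC, fun j hj ↦ ?_⟩
    by_cases hjI : j ∈ I
    · exact hcI j hjI
    · exact congrFun hrestrict ⟨j, Finset.mem_sdiff.2 ⟨hj, hjI⟩⟩
  have hrange : finrank F (LinearMap.range restrict) ≤ (J \ I).card := by
    simpa using Submodule.finrank_le (LinearMap.range restrict)
  have hrank := restrict.finrank_range_add_finrank_ker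
  omega

end Shortening

section Locality

variable {F ι : Type*} [Field F] [Fintype ι] [DecidableEq ι] {C : Submodule F (ι → F)} {r : ℕ}

theorem HasLocality.exists_vanishingSubcode_insert_eq {i : ι} (h : HasLocality C i r) :
    ∃ R : Finset ι, i ∉ R ∧ R.card ≤ r ∧
      ∀ I, R ⊆ I → vanishingSubcode C (insert i I) = vanishingSubcode C I := by
  obtain ⟨R, hiR, hRr, hrepair⟩ := h
  refine ⟨R, hiR, hRr, fun I hRI ↦ ?_⟩
  ext c
  simp only [mem_vanishingSubcode, Finset.forall_mem_insert]
  refine ⟨fun ⟨hcC, _, hcI⟩ ↦ ⟨hcC, hcI⟩, fun ⟨hcC, hcI⟩ ↦ ⟨hcC, ?_, hcI⟩⟩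
  exact hrepair c hcC 0 C.zero_mem fun j hj ↦ hcI j (hRI hj)

-- The truncated subtraction covers the case in which fewer than `r + 1` coordinates are left.
theorem exists_card_compl_eq_sub_and_finrank_vanishingSubcode_le
    (hloc : ∀ i, HasLocality C i r) (I : Finset ι) :
    ∃ J : Finset ι, Jᶜ.card = Iᶜ.card - (r + 1) ∧
      finrank F (vanishingSubcode C I) ≤ r + finrank F (vanishingSubcode C J) := by
  by_cases hI : ∃ i, i ∉ I
  · obtain ⟨i, hiI⟩ := hI
    obtain ⟨R, hiR, hRr, hinsert⟩ := (hloc i).exists_vanishingSubcode_insert_eq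
    have hblock : (insert i (I ∪ R)).card ≤ I.card + (r + 1) := by
      have := Finset.card_insert_le i (I ∪ R)
      have := Finset.card_union_le I R
      omega
    obtain ⟨J, hJ, hJcard⟩ := Finset.exists_superset_card_eq
      (le_min (Finset.card_le_univ _) hblock) (min_le_left _ _)
    obtain ⟨hiJ, hIJ, hRJ⟩ : i ∈ J ∧ I ⊆ J ∧ R ⊆ J := by
      simpa only [Finset.insert_subset_iff, Finset.union_subset_iff] using hJ
    have hfree : vanishingSubcode C J = vanishingSubcode C (J.erase i) := by
      rw [← hinsert _ (Finset.subset_erase.2 ⟨hRJ, hiR⟩), Finset.insert_erase hiJ]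
    have hnew : (J.erase i \ I).card ≤ r := by
      rw [Finset.card_sdiff_of_subset (Finset.subset_erase.2 ⟨hIJ, hiI⟩),
        Finset.card_erase_of_mem hiJ]
      omega
    refine ⟨J, ?_, ?_⟩
    · rw [Finset.card_compl, Finset.card_compl]
      omega
    · have hloss := finrank_vanishingSubcode_le_add_card_sdiff C I (J.erase i)
      rw [hfree]
      omega
  · obtain rfl : I = Finset.univ := by simpa [Finset.eq_univ_iff_forall] using hI
    exact ⟨Finset.univ, by simp, Nat.le_add_left _ _⟩

theorem exists_card_compl_eq_and_finrank_le_mul_add (hloc : ∀ i, HasLocality C i r) (t : ℕ) :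
    ∃ I : Finset ι, Iᶜ.card = Fintype.card ι - t * (r + 1) ∧
      finrank F C ≤ t * r + finrank F (vanishingSubcode C I) := by
  induction t with
  | zero => exact ⟨∅, by simp, by rw [vanishingSubcode_empty, zero_mul, zero_add]⟩
  | succ t ih =>
    obtain ⟨I, hIcard, hI⟩ := ih
    obtain ⟨J, hJcard, hJ⟩ := exists_card_compl_eq_sub_and_finrank_vanishingSubcode_le hloc I
    refine ⟨J, ?_, ?_⟩
    · rw [hJcard, hIcard, add_one_mul, Nat.sub_sub]
    · rw [add_one_mul]
      omega

end Locality

section Dimension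

theorem hammingNorm_comp_eq_of_injective {κ ι α : Type*} [Fintype κ] [Fintype ι] [Zero α]
    [DecidableEq α] {e : κ → ι} (he : Function.Injective e) {c : ι → α}
    (hc : ∀ i ∉ Set.range e, c i = 0) : hammingNorm (c ∘ e) = hammingNorm c := by
  refine Finset.card_bij (fun x _ ↦ e x) (by simp) (fun _ _ _ _ h ↦ he h) fun i hi ↦ ?_
  have hci : c i ≠ 0 := by simpa using hi
  obtain ⟨x, rfl⟩ : i ∈ Set.range e := not_imp_comm.1 (hc i) hci
  exact ⟨x, by simpa using hci, rfl⟩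

variable {F ι : Type*} [Field F] [Fintype ι] [DecidableEq F]

theorem minDist_le_hammingNorm {C : Submodule F (ι → F)} {c : ι → F} (hc : c ∈ C) (hc0 : c ≠ 0) :
    minDist C ≤ hammingNorm c :=
  Nat.sInf_le ⟨c, hc, hc0, rfl⟩

variable [Fintype F]

theorem finrank_le_kOpt {n d : ℕ} (D : Submodule F (Fin n → F))
    (hd : ∀ c ∈ D, c ≠ 0 → d ≤ hammingNorm c) : finrank F D ≤ kOpt F n d := by
  refine le_csSup ⟨n, ?_⟩ ⟨D, rfl, hd⟩
  rintro _ ⟨E, rfl, _⟩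
  simpa using Submodule.finrank_le E

theorem finrank_le_kOpt_card_of_support_subset {d : ℕ} (D : Submodule F (ι → F)) (S : Finset ι)
    (hS : ∀ c ∈ D, ∀ i ∉ S, c i = 0) (hd : ∀ c ∈ D, c ≠ 0 → d ≤ hammingNorm c) :
    finrank F D ≤ kOpt F S.card d := by
  let e : Fin S.card → ι := Subtype.val ∘ S.equivFin.symm
  let restrict : (ι → F) →ₗ[F] (Fin S.card → F) := LinearMap.funLeft F F e
  have hnorm : ∀ c ∈ D, hammingNorm (restrict c) = hammingNorm c := fun c hc ↦
    hammingNorm_comp_eq_of_injective (Subtype.val_injective.comp S.equivFin.symm.injective)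
      fun i hi ↦ hS c hc i (by simpa [e, EquivLike.range_comp] using hi)
  have hinj : Function.Injective (restrict.domRestrict D) := by
    rw [injective_iff_map_eq_zero]
    rintro ⟨c, hc⟩ h
    have hc0 : hammingNorm c = 0 := (hnorm c hc).symm.trans (hammingNorm_eq_zero.2 h)
    exact Subtype.ext (hammingNorm_eq_zero.1 hc0)
  rw [← LinearMap.finrank_range_of_inj hinj, LinearMap.range_domRestrict]
  refine finrank_le_kOpt _ ?_
  rintro _ ⟨c, hc, rfl⟩ hne
  rw [hnorm c hc]
  exact hd c hc (ne_of_apply_ne restrict (by simpa using hne))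

theorem finrank_vanishingSubcode_le_kOpt [DecidableEq ι] (C : Submodule F (ι → F))
    (I : Finset ι) : finrank F (vanishingSubcode C I) ≤ kOpt F Iᶜ.card (minDist C) :=
  finrank_le_kOpt_card_of_support_subset _ _
    (fun _ hc i hi ↦ (mem_vanishingSubcode.1 hc).2 i (by simpa using hi))
    fun _ hc ↦ minDist_le_hammingNorm (mem_vanishingSubcode.1 hc).1

end Dimension

theorem stmt_6_general {F ι : Type*} [Field F] [Fintype F] [DecidableEq F] [Fintype ι]
    {r : ℕ} (C : Submodule F (ι → F)) (hloc : ∀ i, HasLocality C i r) (t : ℕ) :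
    finrank F C ≤ t * r + kOpt F (Fintype.card ι - t * (r + 1)) (minDist C) := by
  classical
  obtain ⟨I, hIcard, hI⟩ := exists_card_compl_eq_and_finrank_le_mul_add hloc t
  rw [← hIcard]
  exact hI.trans (Nat.add_le_add_left (finrank_vanishingSubcode_le_kOpt C I) _)

/-- Cadambe–Mazumdar bound: for a `q`-ary `(n,k,r)` LRC with all symbol locality and minimum
distance `d`, `k ≤ tr + k_opt^{(q)}(n - t(r+1), d)` for every `t` with `1 ≤ t ≤ ⌈k/r⌉ - 1`. -/
theorem stmt_6 {F : Type*} [Field F] [Fintype F] [DecidableEq F]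
    {n k r : ℕ} (hk : 1 ≤ k) (hr : 1 ≤ r)
    (C : Submodule F (Fin n → F)) (hCk : Module.finrank F C = k)
    (hloc : ∀ i : Fin n, HasLocality C i r) :
    ∀ t : ℕ, 1 ≤ t → (t : ℤ) ≤ ⌈(k : ℚ) / r⌉ - 1 →
      k ≤ t * r + kOpt F (n - t * (r + 1)) (minDist C) := by
  intro t _ _
  simpa [hCk] using stmt_6_general C hloc t
end

section
/- Let q be a prime power, F_{q^m} an extension field of F_q, and let l ≥ 1, r ≥ 1, s ≥ 0. Set n = l(r+1) and k = n − l − s − 1, and assume k ≥ 1. Let α_{i,j} ∈ F_{q^m} for i ∈ {1,…,l}, j ∈ {1,…,r+1}, and suppose the elements {α_{i,j} − α_{i,r+1} : i ∈ {1,…,l}, j ∈ {1,…,r}} are linearly independent over F_q. Let H be the (l+s+1)×n matrix over F_{q^m} whose columns are indexed by pairs (i,j), such that for i' ∈ {1,…,l} the entry of row i' in column (i,j) equals 1 if i = i' and 0 otherwise, and for e ∈ {0,1,…,s} the entry of row l+1+e in column (i,j) equals α_{i,j}^{q^e}. Then H has full row rank l+s+1; equivalently, the linear code {x ∈ F_{q^m}^n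 : Hx = 0} has dimension k. -/
/-!
Taking differences of entries in the same block kills the indicator rows of `H` and, since the
`q`-power Frobenius is additive, turns its Moore rows into those of the differences
`α_{i,j} - α_{i,r+1}`. An `F_{q^m}`-linear relation between the latter is a linearized polynomial
of degree less than `q^{s+1}` which vanishes on the `F_q`-span of the differences, a set of `q^{lr}`
elements. As `s + 1 ≤ lr`, that polynomial has too many roots to be nonzero.
-/

open Polynomial

section LinearizedPolynomial

/-- The `q`-linearized polynomial `∑ e < t, c e * X ^ q ^ e`. -/
noncomputable def linearizedPolynomial {R : Type*} [Semiring R] {t : ℕ} (q : ℕ) (c : Fin t → R) :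
    R[X] :=
  ∑ e, C (c e) * X ^ q ^ (e : ℕ)

theorem coeff_linearizedPolynomial {R : Type*} [Semiring R] {t q : ℕ} (hq : 1 < q)
    (c : Fin t → R) (e : Fin t) : (linearizedPolynomial q c).coeff (q ^ (e : ℕ)) = c e := by
  have hpow (d : Fin t) : q ^ (e : ℕ) = q ^ (d : ℕ) ↔ e = d :=
    (Nat.pow_right_injective hq).eq_iff.trans Fin.val_inj
  simp [linearizedPolynomial, coeff_X_pow, hpow]

theorem natDegree_linearizedPolynomial_lt {R : Type*} [Semiring R] {t q : ℕ} (hq : 1 < q)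
    (c : Fin t → R) : (linearizedPolynomial q c).natDegree < q ^ t := by
  refine Nat.lt_of_le_pred (by positivity) ?_
  refine natDegree_sum_le_of_forall_le _ _ fun e _ ↦ (natDegree_C_mul_X_pow_le _ _).trans ?_
  exact Nat.le_pred_of_lt (Nat.pow_lt_pow_right hq e.isLt)

variable {K R : Type*} [Field K] [Fintype K] [CommRing R] [Algebra K R] {t : ℕ}

theorem frobeniusAlgHom_pow_apply (e : ℕ) (x : R) :
    (FiniteField.frobeniusAlgHom K R ^ e) x = x ^ Fintype.card K ^ e := by
  rw [AlgHom.coe_pow, FiniteField.coe_frobeniusAlgHom, pow_iterate]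

variable (K) in
/-- Evaluation of `linearizedPolynomial q c`, for `q` the order of `K`, as a `K`-linear map. -/
noncomputable def linearizedMap (c : Fin t → R) : R →ₗ[K] R :=
  ∑ e, c e • (FiniteField.frobeniusAlgHom K R ^ (e : ℕ)).toLinearMap

theorem eval_linearizedPolynomial (c : Fin t → R) (x : R) :
    (linearizedPolynomial (Fintype.card K) c).eval x = linearizedMap K c x := by
  simp [linearizedPolynomial, linearizedMap, eval_finsetSum, frobeniusAlgHom_pow_apply,
    -AlgHom.coe_pow]

theorem linearizedPolynomial_eq_zero_of_eval_eq_zero [IsDomain R] {m : Type*} [Fintype m]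
    {c : Fin t → R} {v : m → R} (hv : LinearIndependent K v) (ht : t ≤ Fintype.card m)
    (hc : ∀ j, (linearizedPolynomial (Fintype.card K) c).eval (v j) = 0) :
    linearizedPolynomial (Fintype.card K) c = 0 := by
  classical
  refine eq_zero_of_natDegree_lt_card_of_eval_eq_zero _ hv.fintypeLinearCombination_injective
    (fun a ↦ ?_) ?_
  · simp only [eval_linearizedPolynomial] at hc ⊢
    simp [Fintype.linearCombination_apply, hc]
  · calc (linearizedPolynomial (Fintype.card K) c).natDegree
        < Fintype.card K ^ t := natDegree_linearizedPolynomial_lt Fintype.one_lt_card c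
      _ ≤ Fintype.card K ^ Fintype.card m := Nat.pow_le_pow_right Fintype.card_pos ht
      _ = Fintype.card (m → K) := Fintype.card_fun.symm

end LinearizedPolynomial

section MooreMatrix

/-- The Moore matrix of the family `v`, with rows `v ^ q ^ e` for `e < t`. -/
def mooreMatrix {R n : Type*} [Monoid R] (q t : ℕ) (v : n → R) : Matrix (Fin t) n R :=
  .of fun e j ↦ v j ^ q ^ (e : ℕ)

variable {K R : Type*} [Field K] [Fintype K] [CommRing R] [Algebra K R]

theorem mooreMatrix_sub {n : Type*} (t : ℕ) (v w : n → R) :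
    mooreMatrix (Fintype.card K) t (v - w) =
      mooreMatrix (Fintype.card K) t v - mooreMatrix (Fintype.card K) t w := by
  ext e j
  simp only [mooreMatrix, Matrix.of_apply, Matrix.sub_apply, Pi.sub_apply,
    ← frobeniusAlgHom_pow_apply, map_sub]

theorem linearIndependent_row_mooreMatrix [IsDomain R] {m : Type*} [Fintype m] {t : ℕ} {v : m → R}
    (hv : LinearIndependent K v) (ht : t ≤ Fintype.card m) :
    LinearIndependent R (mooreMatrix (Fintype.card K) t v).row := by
  rw [Fintype.linearIndependent_iff]
  intro c hc e
  have hroot (j : m) : (linearizedPolynomial (Fintype.card K) c).eval (v j) = 0 := by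
    simpa [linearizedPolynomial, eval_finsetSum, mooreMatrix, Matrix.row] using congrFun hc j
  rw [← coeff_linearizedPolynomial (Fintype.one_lt_card (α := K)) c e,
    linearizedPolynomial_eq_zero_of_eval_eq_zero hv ht hroot, coeff_zero]

end MooreMatrix

theorem linearIndependent_sumElim_of_map_eq_zero {R V W ι κ : Type*} [Ring R] [AddCommGroup V]
    [Module R V] [AddCommGroup W] [Module R W] {u : ι → V} {w : κ → V} (f : V →ₗ[R] W)
    (hu : LinearIndependent R u) (hfu : ∀ i, f (u i) = 0) (hfw : LinearIndependent R (f ∘ w)) :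
    LinearIndependent R (Sum.elim u w) := by
  have hspan : Submodule.span R (Set.range u) ≤ LinearMap.ker f :=
    Submodule.span_le.2 (Set.range_subset_iff.2 hfu)
  exact hu.sum_type (hfw.of_comp f) ((Submodule.range_ker_disjoint hfw).symm.mono_left hspan)

section BlockIndicator

variable (R : Type*) {ι n : Type*} [DecidableEq ι]

/-- The matrix whose row `i` is the indicator of the block `{x | π x = i}` of the partition of the
columns given by the fibres of `π`: the locality rows of a parity-check matrix. -/
def blockIndicatorMatrix [Zero R] [One R] (π : n → ι) : Matrix ι n R :=
  .of fun i x ↦ if π x = i then 1 else 0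

theorem linearIndependent_row_blockIndicatorMatrix [Semiring R] {π : n → ι}
    (hπ : Function.Surjective π) : LinearIndependent R (blockIndicatorMatrix R π).row := by
  have hrow : (blockIndicatorMatrix R π).row =
      LinearMap.funLeft R R π ∘ fun i ↦ Pi.single i (1 : R) := by
    ext i x
    simp [blockIndicatorMatrix, LinearMap.funLeft_apply, Pi.single_apply]
  rw [hrow]
  exact (Pi.linearIndependent_single_one ι R).map_injOn _
    (LinearMap.funLeft_injective_of_surjective R R π hπ).injOn

variable {R} {K m : Type*} [Field K] [Fintype K] [CommRing R] [IsDomain R] [Algebra K R]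
  [Fintype m] {t : ℕ}

theorem linearIndependent_row_fromRows_blockIndicatorMatrix_mooreMatrix {π : n → ι}
    (hπ : Function.Surjective π) {α : n → R} {a b : m → n} (hab : π ∘ a = π ∘ b)
    (hα : LinearIndependent K (α ∘ a - α ∘ b)) (ht : t ≤ Fintype.card m) :
    LinearIndependent R
      (Matrix.fromRows (blockIndicatorMatrix R π) (mooreMatrix (Fintype.card K) t α)).row := by
  let diff : (n → R) →ₗ[R] (m → R) := LinearMap.funLeft R R a - LinearMap.funLeft R R b
  have hindicator (i : ι) : diff ((blockIndicatorMatrix R π).row i) = 0 := by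
    ext j
    have hj : π (a j) = π (b j) := congrFun hab j
    simp [diff, blockIndicatorMatrix, LinearMap.funLeft_apply, hj]
  have hmoore : diff ∘ (mooreMatrix (Fintype.card K) t α).row =
      (mooreMatrix (Fintype.card K) t (α ∘ a - α ∘ b)).row := by
    rw [mooreMatrix_sub]
    rfl
  exact linearIndependent_sumElim_of_map_eq_zero diff
    (linearIndependent_row_blockIndicatorMatrix R hπ) hindicator
    (hmoore ▸ linearIndependent_row_mooreMatrix hα ht)

end BlockIndicator

theorem rank_add_finrank_ker_mulVecLin {F m n : Type*} [Field F] [Fintype n] (A : Matrix m n F) :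
    A.rank + Module.finrank F (LinearMap.ker A.mulVecLin) = Fintype.card n := by
  rw [Matrix.rank, LinearMap.finrank_range_add_finrank_ker, Module.finrank_fintype_fun_eq_card]

theorem stmt_13_general {K L : Type*} [Field K] [Fintype K] [Field L] [Algebra K L]
    {l r s k : ℕ} (hk : k + (l + s + 1) = l * (r + 1)) (α : Fin l → Fin (r + 1) → L)
    (hind : LinearIndependent K
      (fun p : Fin l × Fin r => α p.1 p.2.castSucc - α p.1 (Fin.last r)))
    (H : Matrix (Fin l ⊕ Fin (s + 1)) (Fin l × Fin (r + 1)) L)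
    (hH1 : ∀ (i' : Fin l) (p : Fin l × Fin (r + 1)),
      H (Sum.inl i') p = if p.1 = i' then 1 else 0)
    (hH2 : ∀ (e : Fin (s + 1)) (p : Fin l × Fin (r + 1)),
      H (Sum.inr e) p = α p.1 p.2 ^ Fintype.card K ^ (e : ℕ)) :
    H.rank = l + s + 1 ∧
    Module.finrank L (LinearMap.ker H.mulVecLin) = k := by
  have hH : H = Matrix.fromRows (blockIndicatorMatrix L Prod.fst)
      (mooreMatrix (Fintype.card K) (s + 1) fun p ↦ α p.1 p.2) := by
    ext (i | e) p
    exacts [hH1 i p, hH2 e p]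
  have hcard : s + 1 ≤ Fintype.card (Fin l × Fin r) := by
    simp only [Fintype.card_prod, Fintype.card_fin]
    linarith
  have hrows : LinearIndependent L H.row := hH ▸
    linearIndependent_row_fromRows_blockIndicatorMatrix_mooreMatrix Prod.fst_surjective
      (a := fun p : Fin l × Fin r ↦ (p.1, p.2.castSucc)) (b := fun p ↦ (p.1, Fin.last r))
      rfl hind hcard
  have hrank : H.rank = l + s + 1 := by simpa [add_assoc] using hrows.rank_matrix
  have hnullity := rank_add_finrank_ker_mulVecLin H
  simp only [Fintype.card_prod, Fintype.card_fin] at hnullity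
  exact ⟨hrank, by omega⟩

/-- Construction 1 (Lemma: dimension property): the parity-check matrix `H` built from
locality rows and Moore-type rows has full row rank `l + s + 1`; equivalently, the linear
code `{x : Hx = 0}` has dimension `k = n - l - s - 1`. -/
theorem stmt_13 {K L : Type*} [Field K] [Fintype K] [Field L] [Fintype L] [Algebra K L]
    {l r s n k : ℕ} (hl : 1 ≤ l) (hr : 1 ≤ r)
    (hn : n = l * (r + 1)) (hk : k + (l + s + 1) = n) (hk1 : 1 ≤ k)
    (α : Fin l → Fin (r + 1) → L)
    (hind : LinearIndependent K
      (fun p : Fin l × Fin r => α p.1 p.2.castSucc - α p.1 (Fin.last r)))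
    (H : Matrix (Fin l ⊕ Fin (s + 1)) (Fin l × Fin (r + 1)) L)
    (hH1 : ∀ (i' : Fin l) (p : Fin l × Fin (r + 1)),
      H (Sum.inl i') p = if p.1 = i' then 1 else 0)
    (hH2 : ∀ (e : Fin (s + 1)) (p : Fin l × Fin (r + 1)),
      H (Sum.inr e) p = α p.1 p.2 ^ Fintype.card K ^ (e : ℕ)) :
    H.rank = l + s + 1 ∧
    Module.finrank L (LinearMap.ker H.mulVecLin) = k :=
  stmt_13_general (hk.trans hn) α hind H hH1 hH2
end
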